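/- Let A ∈ ℝ^{n×n} be symmetric and strictly k-positive, where 1 ≤ k ≤ n, with eigenvalues ordered so that |λ₁| ≥ … ≥ |λ_n|, and let u₁, …, u_k be eigenvectors of A corresponding to λ₁, …, λ_k. Then for all 1 ≤ p ≤ q ≤ k and all real coefficients c_p, …, c_q not all zero, the vector u = Σ_{i=p}^{q} c_i u_i satisfies p−1 ≤ S⁻(u) ≤ S⁺(u) ≤ q−1. -/

import Mathlib

open Matrix Polynomial

/-- Number of sign changes between consecutive entries of a list of reals. -/
noncomputable def signChanges : List ℝ → ℕ
  | [] => 0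
  | [_] => 0
  | a :: b :: l => (if a * b < 0 then 1 else 0) + signChanges (b :: l)

/-- `S⁻(x)`: the number of sign changes in the sequence obtained from `x`
by deleting its zero entries. -/
noncomputable def Sminus {n : ℕ} (x : Fin n → ℝ) : ℕ :=
  signChanges ((List.ofFn x).filter (· ≠ 0))

/-- `S⁺(x)`: the maximal number of sign changes obtainable after replacing
each zero entry of `x` by an arbitrary nonzero value. -/
noncomputable def Splus {n : ℕ} (x : Fin n → ℝ) : ℕ :=
  sSup {m : ℕ | ∃ y : Fin n → ℝ, (∀ i, y i ≠ 0) ∧ (∀ i, x i ≠ 0 → y i = x i) ∧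
    signChanges (List.ofFn y) = m}

/-- A matrix is strictly `k`-positive if all its minors of order at most `k`
(taken with strictly increasing row and column indices) are positive. -/
def IsStrictlyKPositive {m n : ℕ} (X : Matrix (Fin m) (Fin n) ℝ) (k : ℕ) : Prop :=
  ∀ p : ℕ, 1 ≤ p → p ≤ k → ∀ r : Fin p → Fin m, ∀ c : Fin p → Fin n,
    StrictMono r → StrictMono c → 0 < (X.submatrix r c).det

theorem signChanges_cons_cons (a b : ℝ) (l : List ℝ) :
    signChanges (a :: b :: l) = (if a * b < 0 then 1 else 0) + signChanges (b :: l) := by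
  rw [signChanges]

theorem signChanges_cons_le_length (a : ℝ) (l : List ℝ) : signChanges (a :: l) ≤ l.length := by
  induction l generalizing a with
  | nil => simp [signChanges]
  | cons b l ih =>
    rw [signChanges_cons_cons, List.length_cons]
    have := ih b
    split_ifs <;> omega

theorem signChanges_le_length (l : List ℝ) : signChanges l ≤ l.length := by
  cases l with
  | nil => simp [signChanges]
  | cons a l => exact (signChanges_cons_le_length a l).trans (by simp)

theorem signChanges_cons_self (a : ℝ) (l : List ℝ) :
    signChanges (a :: a :: l) = signChanges (a :: l) := by
  rw [signChanges_cons_cons, if_neg (not_lt.2 (mul_self_nonneg a)), zero_add]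

theorem signChanges_le_cons (a : ℝ) (l : List ℝ) : signChanges l ≤ signChanges (a :: l) := by
  cases l with
  | nil => simp [signChanges]
  | cons b l => rw [signChanges_cons_cons]; omega

theorem signChanges_cons_le_cons_cons {a b : ℝ} (hb : b ≠ 0) (l : List ℝ) :
    signChanges (a :: l) ≤ signChanges (a :: b :: l) := by
  cases l with
  | nil => simp [signChanges]
  | cons c l =>
    simp only [signChanges_cons_cons]
    split_ifs with h1 h2 h3 h3
    all_goals try omega
    have := mul_nonneg (not_lt.1 h2) (not_lt.1 h3)
    have := mul_neg_of_pos_of_neg (mul_self_pos.2 hb) h1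
    nlinarith

theorem List.Sublist.signChanges_cons_le {l₁ l₂ : List ℝ} (h : l₁.Sublist l₂)
    (h₂ : ∀ b ∈ l₂, b ≠ 0) (a : ℝ) : signChanges (a :: l₁) ≤ signChanges (a :: l₂) := by
  induction h generalizing a with
  | slnil => rfl
  | cons b _ ih =>
    exact (ih (fun c hc => h₂ c (List.mem_cons_of_mem _ hc)) a).trans
      (signChanges_cons_le_cons_cons (h₂ b List.mem_cons_self) _)
  | cons_cons b _ ih =>
    rw [signChanges_cons_cons, signChanges_cons_cons]
    exact Nat.add_le_add_left (ih (fun c hc => h₂ c (List.mem_cons_of_mem _ hc)) b) _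

theorem List.Sublist.signChanges_le {l₁ l₂ : List ℝ} (h : l₁.Sublist l₂)
    (h₂ : ∀ b ∈ l₂, b ≠ 0) : signChanges l₁ ≤ signChanges l₂ := by
  induction h with
  | slnil => rfl
  | cons b _ ih =>
    exact (ih fun c hc => h₂ c (List.mem_cons_of_mem _ hc)).trans (signChanges_le_cons _ _)
  | cons_cons b h _ =>
    exact h.signChanges_cons_le (fun c hc => h₂ c (List.mem_cons_of_mem _ hc)) b

theorem Sminus_le_Splus {n : ℕ} (x : Fin n → ℝ) : Sminus x ≤ Splus x := by
  set y : Fin n → ℝ := fun i => if x i = 0 then 1 else x i with hy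
  have hy0 : ∀ i, y i ≠ 0 := by
    intro i
    simp only [hy]
    split_ifs with h
    · exact one_ne_zero
    · exact h
  have hyx : ∀ i, x i ≠ 0 → y i = x i := fun i hi => if_neg hi
  have hle : Sminus x ≤ signChanges (List.ofFn y) := by
    refine List.Sublist.signChanges_le ?_ ?_
    · rw [List.ofFn_eq_map, List.ofFn_eq_map, List.filter_map,
        List.map_congr_left (g := y) fun i hi => (hyx i (by simpa using List.of_mem_filter hi)).symm]
      exact List.filter_sublist.map y
    · intro b hb
      obtain ⟨i, rfl⟩ := List.mem_ofFn.1 hb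
      exact hy0 i
  refine hle.trans (le_csSup ⟨n, ?_⟩ ⟨y, hy0, hyx, rfl⟩)
  rintro m ⟨z, -, -, rfl⟩
  simpa using signChanges_le_length (List.ofFn z)

/-- The positions of the sign changes of `x`, preceded by the sign of `ε`. -/
theorem exists_finset_card_eq_signChanges {n : ℕ} (x : Fin n → ℝ) {ε : ℝ} (hε : ε ≠ 0) :
    ∃ J : Finset (Fin n), J.card = signChanges (ε :: (List.ofFn x).filter (· ≠ 0)) ∧
      ∀ i, x i ≠ 0 → 0 < ε * (-1) ^ (J.filter (· ≤ i)).card * x i := by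
  induction n generalizing ε with
  | zero => exact ⟨∅, by simp [signChanges], fun i => i.elim0⟩
  | succ n ih =>
    have hfs : ∀ (J : Finset (Fin n)) (i : Fin n),
        ((J.map (Fin.succEmb n)).filter (· ≤ i.succ)).card = (J.filter (· ≤ i)).card := by
      intro J i
      rw [Finset.filter_map, Finset.card_map]
      congr 1
      refine Finset.filter_congr fun j _ => ?_
      exact Fin.succ_le_succ_iff
    have hf0 : ∀ (J : Finset (Fin n)), (J.map (Fin.succEmb n)).filter (· ≤ 0) = ∅ := by
      intro J
      ext j
      simp only [Finset.mem_filter, Finset.mem_map, Finset.notMem_empty, iff_false]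
      rintro ⟨⟨i, -, rfl⟩, h⟩
      simp at h
    have h0 : ∀ J : Finset (Fin n), (0 : Fin (n + 1)) ∉ J.map (Fin.succEmb n) := by
      intro J h
      obtain ⟨i, -, hi⟩ := Finset.mem_map.1 h
      exact Fin.succ_ne_zero i hi
    rw [List.ofFn_succ]
    by_cases hx : x 0 = 0
    · obtain ⟨J, hJ, hJx⟩ := ih (fun i => x i.succ) hε
      refine ⟨J.map (Fin.succEmb n), by simpa [hx] using hJ, fun i => ?_⟩
      refine Fin.cases (fun h => absurd hx h) (fun i hi => ?_) i
      rw [hfs]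
      exact hJx i hi
    · obtain ⟨J, hJ, hJx⟩ := ih (fun i => x i.succ) hx
      rw [List.filter_cons_of_pos (by simpa using hx), signChanges_cons_cons, ← hJ]
      by_cases hs : ε * x 0 < 0
      · refine ⟨insert 0 (J.map (Fin.succEmb n)), ?_, fun i => ?_⟩
        · rw [Finset.card_insert_of_notMem (h0 J), Finset.card_map, if_pos hs, add_comm]
        · refine Fin.cases (fun _ => ?_) (fun i hi => ?_) i
          · rw [Finset.filter_insert, if_pos le_rfl, hf0]
            simpa using hs
          · rw [Finset.filter_insert, if_pos (Fin.zero_le _), Finset.card_insert_of_notMem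
              fun h => h0 J (Finset.mem_filter.1 h).1, hfs, pow_succ]
            have h := mul_neg_of_neg_of_pos hs (hJx i hi)
            by_contra! hc
            nlinarith [mul_nonneg (mul_self_nonneg (x 0)) (neg_nonneg.2 hc)]
      · have hs' : 0 < ε * x 0 := lt_of_le_of_ne (not_lt.1 hs) (mul_ne_zero hε hx).symm
        refine ⟨J.map (Fin.succEmb n), by simp [hs], fun i => ?_⟩
        refine Fin.cases (fun _ => ?_) (fun i hi => ?_) i
        · rw [hf0]
          simpa using hs'
        · rw [hfs]
          have h := mul_pos hs' (hJx i hi)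
          by_contra! hc
          nlinarith [mul_nonneg (mul_self_nonneg (x 0)) (neg_nonneg.2 hc)]

theorem Finset.card_filter_lt_orderEmbOfFin {n m : ℕ} (K : Finset (Fin n)) (h : K.card = m)
    (a : Fin m) : (K.filter (· < K.orderEmbOfFin h a)).card = a := by
  have : K.filter (· < K.orderEmbOfFin h a) =
      (Finset.Iio a).map (K.orderEmbOfFin h).toEmbedding := by
    ext i
    simp only [mem_filter, mem_map, mem_Iio]
    constructor
    · rintro ⟨hi, hlt⟩
      have : i ∈ Set.range (K.orderEmbOfFin h) := by rw [range_orderEmbOfFin]; exact hi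
      obtain ⟨b, rfl⟩ := this
      exact ⟨b, (K.orderEmbOfFin h).lt_iff_lt.1 hlt, rfl⟩
    · rintro ⟨b, hb, rfl⟩
      exact ⟨K.orderEmbOfFin_mem h b, (K.orderEmbOfFin h).lt_iff_lt.2 hb⟩
  rw [this, card_map, Fin.card_Iio]

theorem Splus_lt_of_minors {n m : ℕ} (hm : 0 < m) {U : Matrix (Fin n) (Fin m) ℝ}
    (hU : ∀ r r' : Fin m ↪o Fin n, 0 < (U.submatrix r id).det * (U.submatrix r' id).det)
    {g : Fin m → ℝ} (hg : g ≠ 0) : Splus (U *ᵥ g) < m := by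
  set x := U *ᵥ g with hx
  suffices h : ∀ y : Fin n → ℝ, (∀ i, y i ≠ 0) → (∀ i, x i ≠ 0 → y i = x i) →
      signChanges (List.ofFn y) < m by
    refine lt_of_le_of_lt (csSup_le' ?_) (Nat.sub_lt hm one_pos)
    rintro _ ⟨y, hy0, hyx, rfl⟩
    exact Nat.le_sub_one_of_lt (h y hy0 hyx)
  intro y hy0 hyx
  by_contra! hlt
  obtain ⟨n, rfl⟩ : ∃ n', n = n' + 1 := by
    refine Nat.exists_eq_add_one_of_ne_zero ?_
    rintro rfl
    simp [signChanges] at hlt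
    omega
  obtain ⟨J, hJ, hJy⟩ := exists_finset_card_eq_signChanges y (hy0 0)
  have hfil : (List.ofFn y).filter (· ≠ 0) = List.ofFn y := by
    rw [List.filter_eq_self]
    intro b hb
    obtain ⟨i, rfl⟩ := List.mem_ofFn.1 hb
    simpa using hy0 i
  rw [hfil, List.ofFn_succ, signChanges_cons_self, ← List.ofFn_succ (f := y)] at hJ
  have h0 : (0 : Fin (n + 1)) ∉ J := by
    intro h
    have h1 := hJy 0 (hy0 0)
    have h2 : J.filter (· ≤ 0) = {0} := by
      ext i
      simp only [Finset.mem_filter, Finset.mem_singleton, Fin.le_zero_iff]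
      exact ⟨fun h => h.2, fun e => ⟨e ▸ h, e⟩⟩
    rw [h2, Finset.card_singleton] at h1
    nlinarith [mul_self_nonneg (y 0)]
  have hK : (insert 0 J).card = signChanges (List.ofFn y) + 1 := by
    rw [Finset.card_insert_of_notMem h0, hJ]
  set j : Fin (m + 1) ↪o Fin (n + 1) :=
    (Fin.castLEOrderEmb (Nat.succ_le_succ hlt)).trans ((insert 0 J).orderEmbOfFin hK) with hj
  have hsign : ∀ a : Fin (m + 1), 0 < y 0 * (-1) ^ (a : ℕ) * y (j a) := by
    intro a
    have h := hJy (j a) (hy0 _)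
    have hcard : (J.filter (· ≤ j a)).card = a := by
      have h1 := (insert 0 J).card_filter_lt_orderEmbOfFin hK
        (Fin.castLE (Nat.succ_le_succ hlt) a)
      change ((insert 0 J).filter (· < j a)).card = (a : ℕ) at h1
      have hmem : j a ∈ insert 0 J := Finset.orderEmbOfFin_mem _ hK _
      have h2 : (insert 0 J).filter (· ≤ j a) = insert (j a) ((insert 0 J).filter (· < j a)) := by
        ext i
        simp only [Finset.mem_filter, Finset.mem_insert, le_iff_lt_or_eq]
        constructor
        · tauto
        · rintro (rfl | h)
          · exact ⟨Finset.mem_insert.1 hmem, Or.inr rfl⟩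
          · tauto
      have h3 := congrArg Finset.card h2
      rw [Finset.card_insert_of_notMem (by simp), h1, Finset.filter_insert, if_pos (Fin.zero_le _),
        Finset.card_insert_of_notMem fun h => h0 (Finset.mem_filter.1 h).1] at h3
      omega
    rwa [hcard] at h
  set M : Matrix (Fin (m + 1)) (Fin (m + 1)) ℝ :=
    of fun a => Fin.cons (x (j a)) (U (j a)) with hM
  have hdet : M.det = 0 := by
    refine exists_mulVec_eq_zero_iff.1 ⟨Fin.cons (-1) g, fun h => ?_, ?_⟩
    · have := congrFun h 0
      simp at this
    · funext a
      simp [hM, mulVec, dotProduct, Fin.sum_univ_succ, hx]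
  have hminor : ∀ a : Fin (m + 1), M.submatrix a.succAbove (Fin.succAbove 0) =
      U.submatrix (a.succAboveOrderEmb.trans j) id := by
    intro a
    ext b c
    simp [hM]
  rw [det_succ_column M 0] at hdet
  set δ := (U.submatrix ((Fin.succAboveOrderEmb 0).trans j) id).det with hδ
  have hterm : ∀ a : Fin (m + 1), x (j a) ≠ 0 →
      0 < y 0 * δ * ((-1) ^ ((a : ℕ) + ((0 : Fin (m + 1)) : ℕ)) * M a 0 *
        (M.submatrix a.succAbove (Fin.succAbove 0)).det) := by
    intro a ha
    have h1 := hsign a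
    rw [hyx _ ha] at h1
    rw [hminor]
    have := mul_pos h1 (hU ((Fin.succAboveOrderEmb 0).trans j) (a.succAboveOrderEmb.trans j))
    have hMa : M a 0 = x (j a) := by simp [hM]
    rw [hMa]
    simp only [Fin.val_zero, add_zero]
    calc 0 < _ := this
      _ = _ := by ring
  have hx0 : ∀ a, x (j a) = 0 := by
    have hsum : ∑ a : Fin (m + 1), y 0 * δ * ((-1) ^ ((a : ℕ) + ((0 : Fin (m + 1)) : ℕ)) * M a 0 *
        (M.submatrix a.succAbove (Fin.succAbove 0)).det) = 0 := by
      rw [← Finset.mul_sum, hdet, mul_zero]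
    by_contra! h
    obtain ⟨a, ha⟩ := h
    refine (Finset.sum_pos' (fun b _ => ?_) ⟨a, Finset.mem_univ a, hterm a ha⟩).ne' hsum
    by_cases hb : x (j b) = 0
    · have hMb : M b 0 = 0 := by simpa [hM] using hb
      simp [hMb]
    · exact (hterm b hb).le
  have hδ0 : δ ≠ 0 := fun h => by
    have := hU ((Fin.succAboveOrderEmb 0).trans j) ((Fin.succAboveOrderEmb 0).trans j)
    rw [← hδ, h] at this
    simp at this
  refine hδ0 (exists_mulVec_eq_zero_iff.1 ⟨g, hg, ?_⟩)
  funext b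
  exact hx0 _

theorem Sminus_ne_of_minors {n s : ℕ} {U : Matrix (Fin n) (Fin (s + 1)) ℝ}
    (hU : ∀ r r' : Fin (s + 1) ↪o Fin n, 0 < (U.submatrix r id).det * (U.submatrix r' id).det)
    {x : Fin n → ℝ} (hx : x ≠ 0) (hUx : Uᵀ *ᵥ x = 0) : Sminus x ≠ s := by
  intro hs
  obtain ⟨ε, l, hl⟩ : ∃ ε l, (List.ofFn x).filter (· ≠ 0) = ε :: l := by
    refine List.exists_cons_of_ne_nil fun h => hx ?_
    rw [List.filter_eq_nil_iff] at h
    funext i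
    simpa using h (x i) (List.mem_ofFn.2 ⟨i, rfl⟩)
  have hε : ε ≠ 0 := by
    have : ε ∈ (List.ofFn x).filter (· ≠ 0) := by rw [hl]; exact List.mem_cons_self
    simpa using List.of_mem_filter this
  obtain ⟨J, hJ, hJx⟩ := exists_finset_card_eq_signChanges x hε
  rw [Sminus, hl] at hs
  rw [hl, signChanges_cons_self, hs] at hJ
  have hsupp : (Finset.univ.filter (x · ≠ 0)).card = l.length + 1 := by
    have h := congrArg List.length hl
    rw [List.ofFn_eq_map, List.filter_map, List.length_map, List.length_cons] at h
    rw [← h]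
    rw [Finset.card_def, Finset.filter_val]
    rfl
  obtain ⟨i₀, hi₀, hi₀J⟩ : ∃ i, x i ≠ 0 ∧ i ∉ J := by
    by_contra! h
    have h1 : Finset.univ.filter (x · ≠ 0) ⊆ J := fun i hi => h i (Finset.mem_filter.1 hi).2
    have h2 := Finset.card_le_card h1
    have h3 := signChanges_cons_le_length ε l
    omega
  set d : Fin (s + 1) → ℝ := fun l =>
    (-1) ^ (l : ℕ) * (U.submatrix (J.orderEmbOfFin hJ) l.succAbove).det with hd
  have hzero : ∀ i ∈ J, (U *ᵥ d) i = 0 := by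
    intro i hi
    have hdet : (U.submatrix (Fin.cons i (J.orderEmbOfFin hJ) : Fin (s + 1) → Fin n) id).det = 0 := by
      have : i ∈ Set.range (J.orderEmbOfFin hJ) := by rw [Finset.range_orderEmbOfFin]; exact hi
      obtain ⟨b, rfl⟩ := this
      exact det_zero_of_row_eq (Fin.succ_ne_zero b) (by ext; simp)
    rw [det_succ_row _ 0] at hdet
    rw [← hdet, mulVec, dotProduct]
    refine Finset.sum_congr rfl fun l _ => ?_
    have : (U.submatrix (Fin.cons i (J.orderEmbOfFin hJ) : Fin (s + 1) → Fin n) id).submatrix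
        (Fin.succAbove 0) l.succAbove = U.submatrix (J.orderEmbOfFin hJ) l.succAbove := by
      ext; simp
    rw [this]
    simp [hd]
    ring
  have hsign : ∀ i ∉ J, ∃ r : Fin (s + 1) ↪o Fin n,
      (U.submatrix r id).det = (-1) ^ (J.filter (· ≤ i)).card * (U *ᵥ d) i := by
    intro i hi
    have hK : (insert i J).card = s + 1 := by rw [Finset.card_insert_of_notMem hi, hJ]
    refine ⟨(insert i J).orderEmbOfFin hK, ?_⟩
    obtain ⟨t, ht⟩ : i ∈ Set.range ((insert i J).orderEmbOfFin hK) := by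
      rw [Finset.range_orderEmbOfFin]; simp
    have hcard : (J.filter (· ≤ i)).card = t := by
      have h := (insert i J).card_filter_lt_orderEmbOfFin hK t
      rw [ht, Finset.filter_insert, if_neg (lt_irrefl i)] at h
      rw [← h]
      congr 1
      refine Finset.filter_congr fun j hj => ⟨fun hle => lt_of_le_of_ne hle ?_, le_of_lt⟩
      rintro rfl
      exact hi hj
    have hcomp : (insert i J).orderEmbOfFin hK ∘ t.succAbove = J.orderEmbOfFin hJ := by
      refine Finset.orderEmbOfFin_unique hJ (fun a => ?_)
        (((insert i J).orderEmbOfFin hK).strictMono.comp t.strictMono_succAbove)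
      refine (Finset.mem_insert.1 (Finset.orderEmbOfFin_mem _ hK (t.succAbove a))).resolve_left ?_
      intro h
      exact t.succAbove_ne a (((insert i J).orderEmbOfFin hK).injective (h.trans ht.symm))
    rw [hcard, det_succ_row _ t, mulVec, dotProduct, Finset.mul_sum]
    refine Finset.sum_congr rfl fun l _ => ?_
    rw [submatrix_submatrix, hcomp]
    simp only [submatrix_apply, ht, hd, id, Function.id_comp, pow_add]
    ring
  obtain ⟨r₀, hr₀⟩ := hsign i₀ hi₀J
  have hpos : ∀ i, x i ≠ 0 → i ∉ J →
      0 < ε * (U.submatrix r₀ id).det * (x i * (U *ᵥ d) i) := by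
    intro i hxi hi
    obtain ⟨r, hr⟩ := hsign i hi
    have h := mul_pos (hJx i hxi) (hU r₀ r)
    rw [hr] at h
    have hone : ((-1 : ℝ) ^ (J.filter (· ≤ i)).card) * (-1) ^ (J.filter (· ≤ i)).card = 1 := by
      rw [← mul_pow]; simp
    calc 0 < _ := h
      _ = _ := by
        linear_combination ε * (U.submatrix r₀ id).det * (x i * (U *ᵥ d) i) * hone
  have hsum : ∑ i, ε * (U.submatrix r₀ id).det * (x i * (U *ᵥ d) i) = 0 := by
    rw [← Finset.mul_sum]
    have : ∑ i, x i * (U *ᵥ d) i = x ⬝ᵥ U *ᵥ d := rfl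
    rw [this, dotProduct_mulVec, ← mulVec_transpose, hUx, zero_dotProduct, mul_zero]
  refine (Finset.sum_pos' (fun i _ => ?_) ⟨i₀, Finset.mem_univ _, hpos i₀ hi₀ hi₀J⟩).ne' hsum
  by_cases hxi : x i = 0
  · simp [hxi]
  by_cases hi : i ∈ J
  · simp [hzero i hi]
  · exact (hpos i hxi hi).le

theorem Matrix.det_mul_eq_sum_orderEmbedding {m n : ℕ} (X : Matrix (Fin m) (Fin n) ℝ)
    (Y : Matrix (Fin n) (Fin m) ℝ) :
    (X * Y).det = ∑ s : Fin m ↪o Fin n, (X.submatrix id s).det * (Y.submatrix s id).det := by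
  classical
  have h1 : (X * Y).det =
      ∑ s : Fin m → Fin n, (∏ i, X i (s i)) * (Y.submatrix s id).det := by
    have h : (X * Y) = fun i => ∑ j, X i j • Y j := by
      ext i j
      simp [Matrix.mul_apply]
    rw [h]
    change (detRowAlternating (R := ℝ) (n := Fin m)).toMultilinearMap _ = _
    rw [MultilinearMap.map_sum]
    refine Finset.sum_congr rfl fun s _ => ?_
    rw [MultilinearMap.map_smul_univ]
    rfl
  have h2 : ∀ s : Fin m ↪o Fin n, (X.submatrix id s).det * (Y.submatrix s id).det =
      ∑ σ : Equiv.Perm (Fin m),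
        (∏ i, X i ((s ∘ σ) i)) * (Y.submatrix (s ∘ σ) id).det := by
    intro s
    rw [← det_transpose, det_apply', Finset.sum_mul]
    refine Finset.sum_congr rfl fun σ _ => ?_
    have : Y.submatrix (s ∘ σ) id = (Y.submatrix s id).submatrix σ id := rfl
    rw [this, det_permute]
    simp only [transpose_apply, submatrix_apply, id, Function.comp]
    ring
  rw [h1, Finset.sum_congr rfl fun s _ => h2 s, ← Finset.sum_product']
  symm
  refine Finset.sum_of_injOn (fun x : (Fin m ↪o Fin n) × Equiv.Perm (Fin m) => x.1 ∘ x.2)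
    ?_ (by simp) ?_ (fun _ _ => rfl)
  · rintro ⟨s, σ⟩ - ⟨t, τ⟩ - hst
    simp only at hst
    have hr : Set.range s = Set.range t := by
      rw [← σ.surjective.range_comp s, hst, τ.surjective.range_comp t]
    obtain rfl : s = t := OrderEmbedding.range_inj.1 hr
    have : σ = τ := by
      ext i
      have := s.injective (congrFun hst i)
      simp [this]
    rw [this]
  · intro s _ hs
    by_cases hinj : Function.Injective s
    · exfalso
      apply hs
      have hc : (Finset.univ.image s).card = m := by
        rw [Finset.card_image_of_injective _ hinj]; simp
      have hex : ∀ i, ∃ j, (Finset.univ.image s).orderEmbOfFin hc j = s i := by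
        intro i
        have := Finset.range_orderEmbOfFin (Finset.univ.image s) hc
        have h : s i ∈ Set.range ((Finset.univ.image s).orderEmbOfFin hc) := by
          rw [this]; simp
        exact h
      choose f hf using hex
      have hfi : Function.Injective f := by
        intro a b hab
        apply hinj
        rw [← hf a, ← hf b, hab]
      refine ⟨((Finset.univ.image s).orderEmbOfFin hc,
        Equiv.ofBijective f (Finite.injective_iff_bijective.1 hfi)), by simp, ?_⟩
      funext i
      simp [hf]
    · obtain ⟨i, j, hij, hne⟩ : ∃ i j, s i = s j ∧ i ≠ j := by
        simpa [Function.Injective] using hinj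
      rw [det_zero_of_row_eq hne (by ext; simp [hij]), mul_zero]

/-- The `m`-th compound matrix, whose entries are the minors of order `m`. -/
def Matrix.compound {a b : ℕ} (m : ℕ) (X : Matrix (Fin a) (Fin b) ℝ) :
    Matrix (Fin m ↪o Fin a) (Fin m ↪o Fin b) ℝ :=
  of fun r s => (X.submatrix r s).det

theorem Matrix.compound_mul {a b c : ℕ} (m : ℕ) (X : Matrix (Fin a) (Fin b) ℝ)
    (Y : Matrix (Fin b) (Fin c) ℝ) : compound m (X * Y) = compound m X * compound m Y := by
  ext r s
  rw [Matrix.mul_apply]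
  change ((X * Y).submatrix r s).det = _
  rw [submatrix_mul _ _ r id s Function.bijective_id, det_mul_eq_sum_orderEmbedding]
  rfl

theorem Matrix.compound_transpose {a b : ℕ} (m : ℕ) (X : Matrix (Fin a) (Fin b) ℝ) :
    compound m Xᵀ = (compound m X)ᵀ := by
  ext r s
  exact det_transpose (X.submatrix s r)

theorem Matrix.compound_diagonal {a m : ℕ} (d : Fin a → ℝ) :
    compound m (diagonal d) = diagonal fun s => ∏ i, d (s i) := by
  ext r s
  by_cases h : r = s
  · subst h
    rw [diagonal_apply_eq]
    change det ((diagonal d).submatrix r r) = _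
    rw [submatrix_diagonal _ _ r.injective, det_diagonal]
    rfl
  · rw [diagonal_apply_ne _ h]
    have : ∃ i, r i ∉ Set.range s := by
      by_contra! hc
      apply h
      apply OrderEmbedding.range_inj.1
      refine Set.eq_of_subset_of_ncard_le (by rintro _ ⟨i, rfl⟩; exact hc i) ?_ (Set.toFinite _)
      rw [← Set.image_univ, ← Set.image_univ, Set.ncard_image_of_injective _ r.injective,
        Set.ncard_image_of_injective _ s.injective]
    obtain ⟨i, hi⟩ := this
    exact det_eq_zero_of_row_eq_zero i fun j => diagonal_apply_ne _ fun e => hi ⟨j, e.symm⟩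

theorem Matrix.compound_one {a m : ℕ} : compound m (1 : Matrix (Fin a) (Fin a) ℝ) = 1 := by
  rw [← diagonal_one, compound_diagonal]
  simp

theorem Matrix.IsSymm.exists_orthogonal_diagonalization {n : ℕ} {A : Matrix (Fin n) (Fin n) ℝ}
    (hA : A.IsSymm) {lam : Fin n → ℝ} (hspec : A.charpoly = ∏ i, (X - C (lam i))) :
    ∃ V : Matrix (Fin n) (Fin n) ℝ, Vᵀ * V = 1 ∧ A = V * diagonal lam * Vᵀ := by
  have hH : A.IsHermitian := isHermitian_iff_isSymm.2 hA
  have hroots : Finset.univ.val.map lam = Finset.univ.val.map hH.eigenvalues := by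
    have h1 := hH.charpoly_eq
    rw [hspec] at h1
    have hr : ∀ f : Fin n → ℝ, (∏ i, (X - C (f i))).roots = Finset.univ.val.map f := by
      intro f
      rw [← roots_multiset_prod_X_sub_C (Finset.univ.val.map f), Multiset.map_map]
      rfl
    rw [← hr, ← hr]
    exact congrArg Polynomial.roots h1
  obtain ⟨σ, hσ⟩ : ∃ σ : Equiv.Perm (Fin n), ∀ i, hH.eigenvalues (σ i) = lam i := by
    have hcard : ∀ c, Nonempty ({i // lam i = c} ≃ {i // hH.eigenvalues i = c}) := by
      intro c
      rw [← Fintype.card_eq, Fintype.card_subtype, Fintype.card_subtype]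
      have h := congrArg (Multiset.count c) hroots
      rw [Multiset.count_map, Multiset.count_map] at h
      simp only [eq_comm (a := c)] at h
      exact h
    exact ⟨Equiv.ofFiberEquiv fun c => (hcard c).some, Equiv.ofFiberEquiv_map _⟩
  have hU := (mem_unitaryGroup_iff').1 hH.eigenvectorUnitary.2
  have hS := hH.spectral_theorem
  rw [Unitary.conjStarAlgAut_apply] at hS
  set U : Matrix (Fin n) (Fin n) ℝ := hH.eigenvectorUnitary.1 with hUdef
  have hUstar : star U = Uᵀ := by simp [star_eq_conjTranspose]
  refine ⟨U.submatrix id σ, ?_, ?_⟩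
  · rw [transpose_submatrix, ← submatrix_mul _ _ _ _ _ Function.bijective_id, ← hUstar, hU]
    exact submatrix_one_equiv σ
  · have hd : diagonal lam = (diagonal hH.eigenvalues).submatrix σ σ := by
      rw [submatrix_diagonal _ _ σ.injective]
      congr 1
      funext i
      exact (hσ i).symm
    rw [hd, transpose_submatrix, submatrix_mul_equiv, submatrix_mul_equiv, submatrix_id_id,
      ← hUstar]
    exact hS

theorem Matrix.perron_of_symmetric {ι : Type*} [Fintype ι] [DecidableEq ι]
    {B : Matrix ι ι ℝ} (hB : ∀ i j, 0 < B i j) {W : Matrix ι ι ℝ} {d : ι → ℝ}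
    (hW : Wᵀ * W = 1) (hBW : B = W * diagonal d * Wᵀ) {a : ι} (ha : ∀ i, |d i| ≤ |d a|) :
    0 < d a ∧ ∀ i j, 0 < W i a * W j a := by
  have hW' : W * Wᵀ = 1 := mul_eq_one_comm.1 hW
  have hquad : ∀ y : ι → ℝ, y ⬝ᵥ B *ᵥ y ≤ |d a| * (y ⬝ᵥ y) := by
    intro y
    have h1 : y ⬝ᵥ B *ᵥ y = ∑ i, d i * ((Wᵀ *ᵥ y) i) ^ 2 := by
      rw [hBW, ← mulVec_mulVec, ← mulVec_mulVec, dotProduct_mulVec, ← mulVec_transpose]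
      simp only [dotProduct, mulVec_diagonal]
      exact Finset.sum_congr rfl fun i _ => by ring
    have h2 : y ⬝ᵥ y = ∑ i, ((Wᵀ *ᵥ y) i) ^ 2 := by
      calc y ⬝ᵥ y = y ⬝ᵥ (W * Wᵀ) *ᵥ y := by rw [hW', one_mulVec]
        _ = (Wᵀ *ᵥ y) ⬝ᵥ (Wᵀ *ᵥ y) := by
          rw [← mulVec_mulVec, dotProduct_mulVec, ← mulVec_transpose]
        _ = _ := Finset.sum_congr rfl fun i _ => by ring
    rw [h1, h2, Finset.mul_sum]
    refine Finset.sum_le_sum fun i _ => ?_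
    exact mul_le_mul_of_nonneg_right ((le_abs_self _).trans (ha i)) (sq_nonneg _)
  set x : ι → ℝ := fun i => W i a with hx
  have hBx : B *ᵥ x = d a • x := by
    have h : B * W = W * diagonal d := by rw [hBW, Matrix.mul_assoc, hW, Matrix.mul_one]
    funext i
    have := congrFun (congrFun h i) a
    rw [mul_diagonal] at this
    simpa [Matrix.mul_apply, mulVec, dotProduct, mul_comm, hx] using this
  have hxx : x ⬝ᵥ x = 1 := by
    have := congrFun (congrFun hW a) a
    simpa [Matrix.mul_apply, dotProduct] using this
  obtain ⟨ε, hε, hεd⟩ : ∃ ε : ℝ, |ε| = 1 ∧ |d a| = ε * d a := by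
    rcases le_total 0 (d a) with h | h
    · exact ⟨1, by simp, by simp [abs_of_nonneg h]⟩
    · exact ⟨-1, by simp, by simp [abs_of_nonpos h]⟩
  have habs : (fun i => |x i|) ⬝ᵥ (fun i => |x i|) = 1 := by
    rw [← hxx]
    simp [dotProduct, abs_mul_abs_self]
  have hle := hquad fun i => |x i|
  have hterm : ∀ i j, 0 ≤ B i j * (|x i| * |x j| - ε * (x i * x j)) := by
    intro i j
    refine mul_nonneg (hB i j).le (sub_nonneg.2 ?_)
    calc ε * (x i * x j) ≤ |ε * (x i * x j)| := le_abs_self _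
      _ = |x i| * |x j| := by rw [abs_mul, hε, one_mul, abs_mul]
  have hsum : ∑ i, ∑ j, B i j * (|x i| * |x j| - ε * (x i * x j)) ≤ 0 := by
    have h1 : ∑ i, ∑ j, B i j * (|x i| * |x j| - ε * (x i * x j)) =
        (fun i => |x i|) ⬝ᵥ B *ᵥ (fun i => |x i|) - ε * (x ⬝ᵥ B *ᵥ x) := by
      simp only [dotProduct, mulVec, Finset.mul_sum, ← Finset.sum_sub_distrib]
      exact Finset.sum_congr rfl fun i _ => Finset.sum_congr rfl fun j _ => by ring
    rw [h1, hBx, dotProduct_smul, hxx]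
    rw [habs] at hle
    simp only [smul_eq_mul]
    linarith
  have heq : ∀ i j, |x i| * |x j| = ε * (x i * x j) := by
    intro i j
    have h1 := (Finset.sum_eq_zero_iff_of_nonneg
      (fun i _ => Finset.sum_nonneg fun j _ => hterm i j)).1
      (le_antisymm hsum (Finset.sum_nonneg fun i _ => Finset.sum_nonneg fun j _ => hterm i j))
      i (Finset.mem_univ i)
    have h2 := (Finset.sum_eq_zero_iff_of_nonneg (fun j _ => hterm i j)).1 h1 j (Finset.mem_univ j)
    exact sub_eq_zero.1 ((mul_eq_zero.1 h2).resolve_left (hB i j).ne')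
  obtain ⟨i₀, hi₀⟩ : ∃ i, x i ≠ 0 := by
    by_contra! h
    simp [dotProduct, h] at hxx
  have hε1 : ε = 1 := by
    have h := heq i₀ i₀
    rw [abs_mul_abs_self] at h
    exact (mul_right_cancel₀ (mul_ne_zero hi₀ hi₀) (by rw [one_mul]; exact h)).symm
  have hnn : ∀ i j, 0 ≤ x i * x j := by
    intro i j
    have := heq i j
    rw [hε1, one_mul] at this
    rw [← this]
    positivity
  have hpos : ∀ i, 0 < d a * (x i * x i₀) := by
    intro i
    have h := congrFun hBx i
    have h1 : d a * (x i * x i₀) = ∑ j, B i j * (x j * x i₀) := by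
      have h2 : d a * x i = ∑ j, B i j * x j := h.symm
      rw [← mul_assoc, h2, Finset.sum_mul]
      exact Finset.sum_congr rfl fun j _ => by ring
    rw [h1]
    refine Finset.sum_pos' (fun j _ => mul_nonneg (hB i j).le (hnn _ _)) ⟨i₀, Finset.mem_univ _, ?_⟩
    exact mul_pos (hB i i₀) (mul_self_pos.2 hi₀)
  have hd : 0 < d a := by
    have := hpos i₀
    exact (pos_iff_pos_of_mul_pos this).2 (mul_self_pos.2 hi₀)
  refine ⟨hd, fun i j => lt_of_le_of_ne (hnn i j) fun h => ?_⟩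
  have h1 := hpos i
  have h2 := hpos j
  rcases mul_eq_zero.1 h.symm with h | h
  · rw [show x i = 0 from h] at h1
    simp at h1
  · rw [show x j = 0 from h] at h2
    simp at h2

theorem Matrix.abs_lt_of_perron_of_symmetric {ι : Type*} [Fintype ι] [DecidableEq ι]
    {B : Matrix ι ι ℝ} (hB : ∀ i j, 0 < B i j) {W : Matrix ι ι ℝ} {d : ι → ℝ}
    (hW : Wᵀ * W = 1) (hBW : B = W * diagonal d * Wᵀ) {a : ι} (ha : ∀ i, |d i| ≤ |d a|)
    {b : ι} (hba : b ≠ a) : |d b| < |d a| := by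
  refine lt_of_le_of_ne (ha b) fun h => ?_
  have h1 := (perron_of_symmetric hB hW hBW ha).2
  have h2 := (perron_of_symmetric hB hW hBW (a := b) fun i => h ▸ ha i).2
  have h3 : ∑ i, W i b * W i a = 0 := by
    have := congrFun (congrFun hW b) a
    rwa [one_apply_ne hba, Matrix.mul_apply] at this
  have h4 : ∑ i, (W a b * W a a) * (W i b * W i a) = 0 := by
    rw [← Finset.mul_sum, h3, mul_zero]
  refine (Finset.sum_pos (fun i _ => ?_) ⟨a, Finset.mem_univ a⟩).ne' h4
  calc 0 < _ := mul_pos (h1 a i) (h2 a i)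
    _ = _ := by ring

section Eigenbasis

variable {n k m : ℕ} {A V : Matrix (Fin n) (Fin n) ℝ} {lam : Fin n → ℝ}

theorem compound_pos_of_isStrictlyKPositive (hA : IsStrictlyKPositive A k) (hm1 : 1 ≤ m)
    (hmk : m ≤ k) (r s : Fin m ↪o Fin n) : 0 < compound m A r s :=
  hA m hm1 hmk r s r.strictMono s.strictMono

theorem compound_orthogonal (hV : Vᵀ * V = 1) : (compound m V)ᵀ * compound m V = 1 := by
  rw [← compound_transpose, ← compound_mul, hV, compound_one]

theorem compound_eq_diagonalization (hAV : A = V * diagonal lam * Vᵀ) :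
    compound m A = compound m V * diagonal (fun s : Fin m ↪o Fin n => ∏ i, lam (s i)) *
      (compound m V)ᵀ := by
  rw [← compound_transpose, ← compound_diagonal, ← compound_mul, ← compound_mul, ← hAV]

theorem castLE_le_orderEmb (hmn : m ≤ n) (s : Fin m ↪o Fin n) (i : Fin m) :
    Fin.castLE hmn i ≤ s i := by
  obtain ⟨i, hi⟩ := i
  induction i with
  | zero => exact Nat.zero_le _
  | succ i ih =>
    have h1 : (i : ℕ) ≤ s ⟨i, by omega⟩ := ih (by omega)
    have h2 : s ⟨i, by omega⟩ < s ⟨i + 1, hi⟩ := s.strictMono (Fin.mk_lt_mk.2 (Nat.lt_succ_self i))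
    exact Nat.succ_le_of_lt (lt_of_le_of_lt h1 h2)

theorem abs_prod_le_of_antitone (hord : ∀ i j : Fin n, i ≤ j → |lam j| ≤ |lam i|) (hmn : m ≤ n)
    (s : Fin m ↪o Fin n) :
    |∏ i, lam (s i)| ≤ |∏ i, lam (Fin.castLEOrderEmb hmn i)| := by
  rw [Finset.abs_prod, Finset.abs_prod]
  exact Finset.prod_le_prod (fun _ _ => abs_nonneg _) fun i _ =>
    hord _ _ (castLE_le_orderEmb hmn s i)

theorem eigenbasis_minors_pos (hA : IsStrictlyKPositive A k) (hV : Vᵀ * V = 1)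
    (hAV : A = V * diagonal lam * Vᵀ) (hord : ∀ i j : Fin n, i ≤ j → |lam j| ≤ |lam i|)
    (hm1 : 1 ≤ m) (hmk : m ≤ k) (hmn : m ≤ n) (r r' : Fin m ↪o Fin n) :
    0 < ((V.submatrix id (Fin.castLE hmn)).submatrix r id).det *
      ((V.submatrix id (Fin.castLE hmn)).submatrix r' id).det :=
  (perron_of_symmetric (compound_pos_of_isStrictlyKPositive hA hm1 hmk) (compound_orthogonal hV)
    (compound_eq_diagonalization hAV) (a := Fin.castLEOrderEmb hmn)
    (abs_prod_le_of_antitone hord hmn)).2 r r'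

theorem abs_eigenvalue_lt (hA : IsStrictlyKPositive A k) (hV : Vᵀ * V = 1)
    (hAV : A = V * diagonal lam * Vᵀ) (hord : ∀ i j : Fin n, i ≤ j → |lam j| ≤ |lam i|)
    {i j : Fin n} (hij : i < j) (hik : (i : ℕ) < k) : |lam j| < |lam i| := by
  refine lt_of_le_of_ne (hord i j hij.le) fun h => ?_
  have hmn : (i : ℕ) + 1 ≤ n := i.2
  have hmono : StrictMono fun l : Fin ((i : ℕ) + 1) =>
      if l = Fin.last i then j else Fin.castLE hmn l := by
    intro a b hab
    have ha : a ≠ Fin.last i := (lt_of_lt_of_le hab (Fin.le_last b)).ne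
    simp only [if_neg ha]
    split_ifs with hb
    · refine lt_of_lt_of_le ?_ hij.le
      exact Fin.lt_def.2 (Fin.lt_last_iff_ne_last.2 ha)
    · exact hab
  have hne : OrderEmbedding.ofStrictMono _ hmono ≠ Fin.castLEOrderEmb hmn := by
    intro he
    have := congrArg (fun f : Fin ((i : ℕ) + 1) ↪o Fin n => f (Fin.last i)) he
    simp only [OrderEmbedding.coe_ofStrictMono, if_true] at this
    exact hij.ne (this.trans (Fin.ext rfl)).symm
  refine (abs_lt_of_perron_of_symmetric
    (compound_pos_of_isStrictlyKPositive hA (Nat.succ_pos _) hik) (compound_orthogonal hV)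
    (compound_eq_diagonalization hAV) (abs_prod_le_of_antitone hord hmn) hne).ne ?_
  rw [Finset.abs_prod, Finset.abs_prod]
  refine Finset.prod_congr rfl fun l _ => ?_
  rw [OrderEmbedding.coe_ofStrictMono]
  split_ifs with hl
  · rw [h, hl]
    rfl
  · rfl

theorem eigenvector_eq_mulVec_single (hA : IsStrictlyKPositive A k) (hV : Vᵀ * V = 1)
    (hAV : A = V * diagonal lam * Vᵀ) (hord : ∀ i j : Fin n, i ≤ j → |lam j| ≤ |lam i|)
    {i : Fin n} (hik : (i : ℕ) < k) {v : Fin n → ℝ} (hv : v ≠ 0) (hAv : A *ᵥ v = lam i • v) :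
    ∃ e : ℝ, e ≠ 0 ∧ v = V *ᵥ Pi.single i e := by
  have hVt : V * Vᵀ = 1 := mul_eq_one_comm.1 hV
  have hvV : v = V *ᵥ (Vᵀ *ᵥ v) := by rw [mulVec_mulVec, hVt, one_mulVec]
  have hlam : ∀ j, j ≠ i → lam j ≠ lam i := by
    intro j hj h
    rcases lt_or_gt_of_ne hj with hlt | hlt
    · exact (abs_eigenvalue_lt hA hV hAV hord hlt (lt_trans hlt hik)).ne (by rw [h])
    · exact (abs_eigenvalue_lt hA hV hAV hord hlt hik).ne (by rw [h])
  have hsingle : Vᵀ *ᵥ v = Pi.single i ((Vᵀ *ᵥ v) i) := by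
    funext j
    by_cases hj : j = i
    · subst hj
      simp
    · rw [Pi.single_eq_of_ne hj]
      have h1 : Vᵀ *ᵥ (A *ᵥ v) = diagonal lam *ᵥ (Vᵀ *ᵥ v) := by
        rw [mulVec_mulVec, mulVec_mulVec, hAV, ← Matrix.mul_assoc, ← Matrix.mul_assoc, hV,
          Matrix.one_mul]
      rw [hAv, mulVec_smul] at h1
      have h2 := congrFun h1 j
      rw [mulVec_diagonal, Pi.smul_apply, smul_eq_mul] at h2
      by_contra hne
      exact hlam j hj (mul_right_cancel₀ hne h2).symm
  refine ⟨(Vᵀ *ᵥ v) i, fun h => hv ?_, by rw [← hsingle]; exact hvV⟩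
  rw [hvV, hsingle, h, Pi.single_zero, mulVec_zero]

end Eigenbasis

/-- For a symmetric strictly `k`-positive matrix with eigenvalues ordered by
decreasing modulus and corresponding eigenvectors `u 0, …, u (k-1)` (zero-based),
any nontrivial linear combination `∑_{i=p}^{q} c i • u i` with `p ≤ q < k`
(zero-based) has between `p` and `q` sign changes:
`p ≤ S⁻(u) ≤ S⁺(u) ≤ q`. -/
theorem symm_strictly_kpositive_eigenvector_combination_sign_changes
    {n k : ℕ} (hk1 : 1 ≤ k) (hkn : k ≤ n)
    (A : Matrix (Fin n) (Fin n) ℝ) (hsymm : A.IsSymm)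
    (hA : IsStrictlyKPositive A k)
    (lam : Fin n → ℝ)
    (hspec : A.charpoly = ∏ i, (X - C (lam i)))
    (hord : ∀ i j : Fin n, i ≤ j → |lam j| ≤ |lam i|)
    (u : Fin n → Fin n → ℝ)
    (hu : ∀ i : Fin n, (i : ℕ) < k → u i ≠ 0 ∧ A.mulVec (u i) = lam i • u i)
    (p q : Fin n) (hpq : p ≤ q) (hq : (q : ℕ) < k)
    (c : Fin n → ℝ) (hc : ∃ i ∈ Finset.Icc p q, c i ≠ 0) :
    (p : ℕ) ≤ Sminus (∑ i ∈ Finset.Icc p q, c i • u i) ∧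
    Sminus (∑ i ∈ Finset.Icc p q, c i • u i) ≤ Splus (∑ i ∈ Finset.Icc p q, c i • u i) ∧
    Splus (∑ i ∈ Finset.Icc p q, c i • u i) ≤ (q : ℕ) := by
  obtain ⟨V, hV, hAV⟩ := hsymm.exists_orthogonal_diagonalization hspec
  have hex : ∀ i : Fin n, ∃ e : ℝ, (i : ℕ) < k → e ≠ 0 ∧ u i = V *ᵥ Pi.single i e := by
    intro i
    by_cases hi : (i : ℕ) < k
    · obtain ⟨e, he⟩ := eigenvector_eq_mulVec_single hA hV hAV hord hi (hu i hi).1 (hu i hi).2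
      exact ⟨e, fun _ => he⟩
    · exact ⟨0, fun h => absurd h hi⟩
  choose e he using hex
  have hlt : ∀ i ∈ Finset.Icc p q, (i : ℕ) < k := fun i hi =>
    lt_of_le_of_lt (Finset.mem_Icc.1 hi).2 hq
  set g : Fin n → ℝ := fun i => if i ∈ Finset.Icc p q then c i * e i else 0 with hg
  have hx : ∑ i ∈ Finset.Icc p q, c i • u i = V *ᵥ g := by
    have hgs : g = ∑ i ∈ Finset.Icc p q, c i • Pi.single i (e i) := by
      funext j
      simp [hg, Finset.sum_apply, Pi.single_apply]
    rw [hgs, mulVec_sum]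
    refine Finset.sum_congr rfl fun i hi => ?_
    rw [mulVec_smul, ← (he i (hlt i hi)).2]
  obtain ⟨i₀, hi₀, hci₀⟩ := hc
  have hgi₀ : g i₀ ≠ 0 := by
    simp only [hg, if_pos hi₀]
    exact mul_ne_zero hci₀ (he i₀ (hlt i₀ hi₀)).1
  have hVg : Vᵀ *ᵥ (V *ᵥ g) = g := by rw [mulVec_mulVec, hV, one_mulVec]
  rw [hx]
  refine ⟨?_, Sminus_le_Splus _, ?_⟩
  · by_contra! hs
    have hsn : Sminus (V *ᵥ g) + 1 ≤ n := lt_trans hs p.2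
    refine Sminus_ne_of_minors (x := V *ᵥ g) (U := V.submatrix id (Fin.castLE hsn))
      (eigenbasis_minors_pos hA hV hAV hord (Nat.succ_pos _)
        ((Nat.succ_le_of_lt hs).trans (le_trans (Fin.le_def.1 hpq) hq.le)) hsn) ?_ ?_ rfl
    · intro h
      rw [h, mulVec_zero] at hVg
      exact hgi₀ (congrFun hVg i₀).symm
    · funext l
      have hl : g (Fin.castLE hsn l) = 0 := by
        refine if_neg fun h => ?_
        have h1 : (p : ℕ) ≤ l := (Finset.mem_Icc.1 h).1
        have h2 := l.2
        omega
      exact (congrFun hVg (Fin.castLE hsn l)).trans hl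
  · have hqn : (q : ℕ) + 1 ≤ n := q.2
    have hVU : V *ᵥ g = V.submatrix id (Fin.castLE hqn) *ᵥ (g ∘ Fin.castLE hqn) := by
      funext i
      simp only [mulVec, dotProduct, submatrix_apply, id, Function.comp_apply]
      symm
      refine Finset.sum_of_injOn (Fin.castLE hqn) (Fin.castLE_injective hqn).injOn (by simp)
        (fun j _ hj => ?_) fun _ _ => rfl
      rw [hg]
      simp only
      rw [if_neg, mul_zero]
      intro hjI
      exact hj ⟨⟨j, Nat.lt_succ_of_le (Finset.mem_Icc.1 hjI).2⟩, by simp, rfl⟩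
    rw [hVU]
    refine Nat.le_of_lt_succ (Splus_lt_of_minors (Nat.succ_pos _)
      (eigenbasis_minors_pos hA hV hAV hord (Nat.succ_pos _) hq hqn) fun h => hgi₀ ?_)
    exact congrFun h ⟨i₀, Nat.lt_succ_of_le (Finset.mem_Icc.1 hi₀).2⟩
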